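/- arXiv:1112.4959 — 6 statements merged into one kernel-verified Lean document; each statement's English description precedes it below -/
import Mathlib

section
/- Let S be a unitary 2L×2L complex matrix written in L×L blocks as S = [[α, β],[γ, δ]]. Then the following are equivalent: (i) β is invertible; (ii) γ is invertible; (iii) α*α < 1 (i.e. 1 − α*α is positive definite); (iv) δ*δ < 1 (i.e. 1 − δ*δ is positive definite). -/
open Matrix
open scoped ComplexOrder

/-!
The two block columns of a unitary `S = [[α, β], [γ, δ]]` are isometries, so `1 - αᴴ * α = γᴴ * γ`
and `1 - δᴴ * δ = βᴴ * β`; a Gram matrix `Mᴴ * M` is positive definite exactly when `M` is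
invertible. It remains to compare `β` and `γ`. The lower-left block of `S⁻¹ = Sᴴ` is `βᴴ`, and
the lower-left blocks `C` and `C'` of mutually inverse matrices are invertible together: the first
column of `S⁻¹ * S = 1` reads `A' * A + B' * C = 1` and `C' * A + D' * C = 0`, so if `C'` is
invertible, eliminating `A` gives the left inverse `B' - A' * C'⁻¹ * D'` of `C`.
-/

section InverseBlocks

variable {n R : Type*} [Fintype n] [DecidableEq n] [Ring R] [IsStablyFiniteRing R]
  {A B C D A' B' C' D' : Matrix n n R}

theorem isUnit_block₂₁_of_fromBlocks_mul_eq_one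
    (h : fromBlocks A' B' C' D' * fromBlocks A B C D = 1) (hC' : IsUnit C') : IsUnit C := by
  obtain ⟨V, hV⟩ := hC'.exists_left_inv
  rw [fromBlocks_multiply, ← fromBlocks_one, fromBlocks_inj] at h
  obtain ⟨h₁₁, -, h₂₁, -⟩ := h
  have hA : A = -(V * D' * C) :=
    calc A = V * (C' * A) := by rw [← mul_assoc, hV, one_mul]
      _ = -(V * D' * C) := by rw [eq_neg_of_add_eq_zero_left h₂₁, mul_neg, mul_assoc]
  have hC : (B' - A' * V * D') * C = 1 :=
    calc (B' - A' * V * D') * C = A' * -(V * D' * C) + B' * C := by noncomm_ring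
      _ = 1 := by rw [← hA, h₁₁]
  exact .of_mul_eq_one_right _ hC

theorem isUnit_block₂₁_iff_of_fromBlocks_mul_eq_one
    (h : fromBlocks A B C D * fromBlocks A' B' C' D' = 1) : IsUnit C ↔ IsUnit C' :=
  ⟨isUnit_block₂₁_of_fromBlocks_mul_eq_one h,
    isUnit_block₂₁_of_fromBlocks_mul_eq_one (mul_eq_one_comm.mp h)⟩

end InverseBlocks

section IsometricBlocks

variable {l m n o R : Type*} [Fintype n] [Fintype o] [DecidableEq l] [DecidableEq m]
  [Ring R] [StarRing R]
  {α : Matrix n l R} {β : Matrix n m R} {γ : Matrix o l R} {δ : Matrix o m R}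

theorem one_sub_conjTranspose_mul_self_block₁₁
    (h : (fromBlocks α β γ δ)ᴴ * fromBlocks α β γ δ = 1) : 1 - αᴴ * α = γᴴ * γ := by
  rw [fromBlocks_conjTranspose, fromBlocks_multiply, ← fromBlocks_one, fromBlocks_inj] at h
  exact sub_eq_of_eq_add' h.1.symm

theorem one_sub_conjTranspose_mul_self_block₂₂
    (h : (fromBlocks α β γ δ)ᴴ * fromBlocks α β γ δ = 1) : 1 - δᴴ * δ = βᴴ * β := by
  rw [fromBlocks_conjTranspose, fromBlocks_multiply, ← fromBlocks_one, fromBlocks_inj] at h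
  exact sub_eq_of_eq_add h.2.2.2.symm

end IsometricBlocks

section UnitaryBlocks

variable {n R : Type*} [Fintype n] [DecidableEq n] [CommRing R] [StarRing R]
  {α β γ δ : Matrix n n R}

theorem isUnit_block₁₂_iff_isUnit_block₂₁_of_mem_unitaryGroup
    (hS : fromBlocks α β γ δ ∈ unitaryGroup (n ⊕ n) R) : IsUnit β ↔ IsUnit γ := by
  rw [mem_unitaryGroup_iff, star_eq_conjTranspose, fromBlocks_conjTranspose] at hS
  rw [isUnit_block₂₁_iff_of_fromBlocks_mul_eq_one hS, isUnit_conjTranspose]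

end UnitaryBlocks

section OrderedField

variable {n K : Type*} [Fintype n] [DecidableEq n]
  [Field K] [PartialOrder K] [StarRing K] [StarOrderedRing K]

theorem posDef_conjTranspose_mul_self_iff_isUnit {M : Matrix n n K} :
    (Mᴴ * M).PosDef ↔ IsUnit M :=
  ⟨fun h => isUnit_of_mul_isUnit_right h.isUnit,
    fun h => .conjTranspose_mul_self M (mulVec_injective_of_isUnit h)⟩

theorem stmt_0_general {α β γ δ : Matrix n n K}
    (hS : fromBlocks α β γ δ ∈ unitaryGroup (n ⊕ n) K) :
    List.TFAE [IsUnit β, IsUnit γ, (1 - αᴴ * α).PosDef, (1 - δᴴ * δ).PosDef] := by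
  have hSS : (fromBlocks α β γ δ)ᴴ * fromBlocks α β γ δ = 1 := mem_unitaryGroup_iff'.mp hS
  rw [one_sub_conjTranspose_mul_self_block₁₁ hSS, one_sub_conjTranspose_mul_self_block₂₂ hSS]
  tfae_have 1 ↔ 2 := isUnit_block₁₂_iff_isUnit_block₂₁_of_mem_unitaryGroup hS
  tfae_have 3 ↔ 2 := posDef_conjTranspose_mul_self_iff_isUnit
  tfae_have 4 ↔ 1 := posDef_conjTranspose_mul_self_iff_isUnit
  tfae_finish

end OrderedField

/-- For a unitary `2L×2L` matrix `S = [[α, β],[γ, δ]]` (in `L×L` blocks),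
the following are equivalent: `β` invertible; `γ` invertible; `α*α < 1`; `δ*δ < 1`. -/
theorem stmt_0 (L : ℕ) (hL : 1 ≤ L)
    (α β γ δ : Matrix (Fin L) (Fin L) ℂ)
    (hS : fromBlocks α β γ δ ∈ Matrix.unitaryGroup (Fin L ⊕ Fin L) ℂ) :
    List.TFAE [IsUnit β, IsUnit γ, (1 - αᴴ * α).PosDef, (1 - δᴴ * δ).PosDef] :=
  stmt_0_general hS
end

section
/- The map φ defined on 2L×2L block matrices by φ([[α, β],[γ, δ]]) = [[γ − δβ⁻¹α, δβ⁻¹],[−β⁻¹α, β⁻¹]] is a bijection from U(2L)_inv onto U(L,L), with inverse given by [[A, B],[C, D]] ↦ [[−D⁻¹C, D⁻¹],[A − BD⁻¹C, BD⁻¹]]. -/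
open Matrix

/-- The fundamental form `𝓛 = diag(1, −1)`. -/
noncomputable def Lform (L : ℕ) : Matrix (Fin L ⊕ Fin L) (Fin L ⊕ Fin L) ℂ :=
  fromBlocks 1 0 0 (-1)

/-- The Lorentz group `U(L,L)` of signature `(L,L)`. -/
def ULL (L : ℕ) : Set (Matrix (Fin L ⊕ Fin L) (Fin L ⊕ Fin L) ℂ) :=
  {T | Tᴴ * Lform L * T = Lform L}

/-- The set `U(2L)_inv` of unitary matrices with invertible upper-right block. -/
def U2Linv (L : ℕ) : Set (Matrix (Fin L ⊕ Fin L) (Fin L ⊕ Fin L) ℂ) :=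
  {S | S ∈ Matrix.unitaryGroup (Fin L ⊕ Fin L) ℂ ∧ IsUnit S.toBlocks₁₂}

/-- The map `φ` from scattering matrices to transfer matrices. -/
noncomputable def phiMap {L : ℕ} (S : Matrix (Fin L ⊕ Fin L) (Fin L ⊕ Fin L) ℂ) :
    Matrix (Fin L ⊕ Fin L) (Fin L ⊕ Fin L) ℂ :=
  fromBlocks (S.toBlocks₂₁ - S.toBlocks₂₂ * S.toBlocks₁₂⁻¹ * S.toBlocks₁₁)
    (S.toBlocks₂₂ * S.toBlocks₁₂⁻¹) (-(S.toBlocks₁₂⁻¹ * S.toBlocks₁₁)) S.toBlocks₁₂⁻¹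

/-- The claimed inverse map of `φ`. -/
noncomputable def psiMap {L : ℕ} (T : Matrix (Fin L ⊕ Fin L) (Fin L ⊕ Fin L) ℂ) :
    Matrix (Fin L ⊕ Fin L) (Fin L ⊕ Fin L) ℂ :=
  fromBlocks (-(T.toBlocks₂₂⁻¹ * T.toBlocks₂₁)) T.toBlocks₂₂⁻¹
    (T.toBlocks₁₁ - T.toBlocks₁₂ * T.toBlocks₂₂⁻¹ * T.toBlocks₂₁)
    (T.toBlocks₁₂ * T.toBlocks₂₂⁻¹)

/-!
If the scattering matrix `S` sends incoming data `(x, y)` to outgoing data `(u, v)`, then its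
transfer matrix sends the data `(x, u)` on the left to the data `(v, y)` on the right. Hence `S`
preserves `|x|² + |y|²` iff `T` preserves `|x|² - |u|²`: both say that
`|u|² + |v|² = |x|² + |y|²`. Conversely a `T` preserving the indefinite form satisfies
`T₂₂ᴴ T₂₂ = 1 + T₁₂ᴴ T₁₂`, which is positive definite, so `u` can be recovered from `(x, y)`.
-/

open LieAlgebra.Orthogonal (indefiniteDiagonal)

section CommRing

variable {m n p R : Type*} [Fintype n] [DecidableEq n] [CommRing R]

/-- The transfer matrix of a scattering matrix `S` whose upper-right block is invertible: `φ` for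
blocks of arbitrary compatible sizes. If `S (x, y) = (u, v)`, it maps `(x, u)` to `(v, y)`. -/
noncomputable def transferMatrix (S : Matrix (n ⊕ p) (m ⊕ n) R) : Matrix (p ⊕ n) (m ⊕ n) R :=
  fromBlocks (S.toBlocks₂₁ - S.toBlocks₂₂ * S.toBlocks₁₂⁻¹ * S.toBlocks₁₁)
    (S.toBlocks₂₂ * S.toBlocks₁₂⁻¹) (-(S.toBlocks₁₂⁻¹ * S.toBlocks₁₁)) S.toBlocks₁₂⁻¹

/-- The scattering matrix of a transfer matrix `T` whose lower-right block is invertible: the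
inverse of `φ` for blocks of arbitrary compatible sizes. -/
noncomputable def scatteringMatrix (T : Matrix (p ⊕ n) (m ⊕ n) R) : Matrix (n ⊕ p) (m ⊕ n) R :=
  fromBlocks (-(T.toBlocks₂₂⁻¹ * T.toBlocks₂₁)) T.toBlocks₂₂⁻¹
    (T.toBlocks₁₁ - T.toBlocks₁₂ * T.toBlocks₂₂⁻¹ * T.toBlocks₂₁)
    (T.toBlocks₁₂ * T.toBlocks₂₂⁻¹)

theorem scatteringMatrix_transferMatrix {S : Matrix (n ⊕ p) (m ⊕ n) R}
    (hS : IsUnit S.toBlocks₁₂) : scatteringMatrix (transferMatrix S) = S := by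
  have hdet := (isUnit_iff_isUnit_det _).1 hS
  refine ext_iff_blocks.2 ⟨?_, ?_, ?_, ?_⟩ <;>
    simp [scatteringMatrix, transferMatrix, Matrix.mul_assoc, hdet]

theorem transferMatrix_scatteringMatrix {T : Matrix (p ⊕ n) (m ⊕ n) R}
    (hT : IsUnit T.toBlocks₂₂) : transferMatrix (scatteringMatrix T) = T := by
  have hdet := (isUnit_iff_isUnit_det _).1 hT
  refine ext_iff_blocks.2 ⟨?_, ?_, ?_, ?_⟩ <;>
    simp [scatteringMatrix, transferMatrix, Matrix.mul_assoc, hdet]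

theorem isUnit_toBlocks₁₂_scatteringMatrix {T : Matrix (p ⊕ n) (m ⊕ n) R}
    (hT : IsUnit T.toBlocks₂₂) : IsUnit (scatteringMatrix T).toBlocks₁₂ := by
  simpa only [scatteringMatrix, toBlocks_fromBlocks₁₂, isUnit_nonsing_inv_iff] using hT

variable [Fintype m] [DecidableEq m]

/-- The matrix `(x, y) ↦ (x, u)` expressing the data on the left through the incoming data, where
`S (x, y) = (u, v)`. -/
def leftData (S : Matrix (n ⊕ p) (m ⊕ n) R) : Matrix (m ⊕ n) (m ⊕ n) R :=
  fromBlocks 1 0 S.toBlocks₁₁ S.toBlocks₁₂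

/-- The matrix `(x, y) ↦ (v, y)` expressing the data on the right through the incoming data, where
`S (x, y) = (u, v)`. -/
def rightData (S : Matrix (n ⊕ p) (m ⊕ n) R) : Matrix (p ⊕ n) (m ⊕ n) R :=
  fromBlocks S.toBlocks₂₁ S.toBlocks₂₂ 0 1

theorem isUnit_leftData {S : Matrix (n ⊕ p) (m ⊕ n) R} (hS : IsUnit S.toBlocks₁₂) :
    IsUnit (leftData S) :=
  isUnit_fromBlocks_zero₁₂.2 ⟨isUnit_one, hS⟩

theorem transferMatrix_mul_leftData {S : Matrix (n ⊕ p) (m ⊕ n) R}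
    (hS : IsUnit S.toBlocks₁₂) : transferMatrix S * leftData S = rightData S := by
  have hdet := (isUnit_iff_isUnit_det _).1 hS
  simp [transferMatrix, leftData, rightData, fromBlocks_multiply, Matrix.mul_assoc, hdet]

end CommRing

section Isometries

variable (m n p R : Type*) [Fintype n] [Fintype p] [DecidableEq m] [DecidableEq n]
  [DecidableEq p] [CommRing R] [StarRing R]

/-- The matrices along which the Hermitian form `diag(1_p, -1_n)` pulls back to `diag(1_m, -1_n)`.
For `p = m` this is the group `U(m, n)`. -/
def indefiniteIsometries : Set (Matrix (p ⊕ n) (m ⊕ n) R) :=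
  {T | Tᴴ * indefiniteDiagonal p n R * T = indefiniteDiagonal m n R}

/-- The isometries with invertible upper-right block: the scattering matrices that have a transfer
matrix. -/
def isometriesWithUnitCorner : Set (Matrix (n ⊕ p) (m ⊕ n) R) :=
  {S | Sᴴ * S = 1 ∧ IsUnit S.toBlocks₁₂}

end Isometries

theorem indefiniteDiagonal_eq_fromBlocks (m n R : Type*) [DecidableEq m] [DecidableEq n]
    [CommRing R] : indefiniteDiagonal m n R = fromBlocks 1 0 0 (-1) := by
  rw [← diagonal_one, ← diagonal_one, diagonal_neg, fromBlocks_diagonal]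
  rfl

section StarRing

variable {m n p R : Type*} [Fintype n] [Fintype p] [DecidableEq m] [DecidableEq n]
  [DecidableEq p] [CommRing R] [StarRing R]

theorem rightData_form_sub_leftData_form [Fintype m] (S : Matrix (n ⊕ p) (m ⊕ n) R) :
    (rightData S)ᴴ * indefiniteDiagonal p n R * rightData S -
      (leftData S)ᴴ * indefiniteDiagonal m n R * leftData S = Sᴴ * S - 1 := by
  conv_rhs => rw [← fromBlocks_toBlocks S, ← fromBlocks_one]
  simp only [indefiniteDiagonal_eq_fromBlocks, rightData, leftData, fromBlocks_conjTranspose,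
    fromBlocks_multiply, sub_eq_add_neg, fromBlocks_neg, fromBlocks_add]
  congr 1 <;>
    simp only [conjTranspose_one, conjTranspose_zero, Matrix.mul_one, Matrix.mul_zero,
      Matrix.mul_neg, Matrix.neg_mul, add_zero, zero_add, neg_zero, neg_add_rev, neg_neg] <;>
    abel

theorem transferMatrix_mem_indefiniteIsometries_iff [Finite m] {S : Matrix (n ⊕ p) (m ⊕ n) R}
    (hS : IsUnit S.toBlocks₁₂) :
    transferMatrix S ∈ indefiniteIsometries m n p R ↔ Sᴴ * S = 1 := by
  have := Fintype.ofFinite m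
  have hleft : IsUnit (leftData S) := isUnit_leftData hS
  have hleft' : IsUnit (leftData S)ᴴ := by rwa [isUnit_conjTranspose]
  calc
    _ ↔ (leftData S)ᴴ * ((transferMatrix S)ᴴ * indefiniteDiagonal p n R * transferMatrix S) *
          leftData S = (leftData S)ᴴ * indefiniteDiagonal m n R * leftData S := by
      rw [hleft.mul_left_inj, hleft'.mul_right_inj]
      rfl
    _ ↔ (rightData S)ᴴ * indefiniteDiagonal p n R * rightData S =
          (leftData S)ᴴ * indefiniteDiagonal m n R * leftData S := by
      simp only [← transferMatrix_mul_leftData hS, conjTranspose_mul, Matrix.mul_assoc]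
    _ ↔ Sᴴ * S = 1 := by
      rw [← sub_eq_zero, rightData_form_sub_leftData_form, sub_eq_zero]

theorem conjTranspose_toBlocks₂₂_mul_self {T : Matrix (p ⊕ n) (m ⊕ n) R}
    (hT : T ∈ indefiniteIsometries m n p R) :
    T.toBlocks₂₂ᴴ * T.toBlocks₂₂ = 1 + T.toBlocks₁₂ᴴ * T.toBlocks₁₂ := by
  have hblock : T.toBlocks₁₂ᴴ * T.toBlocks₁₂ - T.toBlocks₂₂ᴴ * T.toBlocks₂₂ = -1 := by
    have hform : Tᴴ * indefiniteDiagonal p n R * T = indefiniteDiagonal m n R := hT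
    rw [← fromBlocks_toBlocks T] at hform
    simpa [indefiniteDiagonal_eq_fromBlocks, fromBlocks_conjTranspose, fromBlocks_multiply,
      ← sub_eq_add_neg] using congrArg toBlocks₂₂ hform
  rw [sub_eq_iff_eq_add.1 hblock]
  abel

end StarRing

section StarOrderedField

variable {m n p K : Type*} [Fintype n] [Fintype p] [DecidableEq m] [DecidableEq n]
  [DecidableEq p] [Field K] [PartialOrder K] [StarRing K] [StarOrderedRing K]

theorem isUnit_toBlocks₂₂_of_mem_indefiniteIsometries {T : Matrix (p ⊕ n) (m ⊕ n) K}
    (hT : T ∈ indefiniteIsometries m n p K) : IsUnit T.toBlocks₂₂ := by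
  have hpos : (T.toBlocks₂₂ᴴ * T.toBlocks₂₂).PosDef := by
    rw [conjTranspose_toBlocks₂₂_mul_self hT]
    exact PosDef.one.add_posSemidef (posSemidef_conjTranspose_mul_self _)
  exact isUnit_of_mul_isUnit_right hpos.isUnit

theorem scatteringMatrix_mem_isometriesWithUnitCorner [Finite m] {T : Matrix (p ⊕ n) (m ⊕ n) K}
    (hT : T ∈ indefiniteIsometries m n p K) :
    scatteringMatrix T ∈ isometriesWithUnitCorner m n p K := by
  have hunit : IsUnit T.toBlocks₂₂ := isUnit_toBlocks₂₂_of_mem_indefiniteIsometries hT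
  have hcorner := isUnit_toBlocks₁₂_scatteringMatrix hunit
  refine ⟨(transferMatrix_mem_indefiniteIsometries_iff hcorner).1 ?_, hcorner⟩
  rwa [transferMatrix_scatteringMatrix hunit]

theorem stmt_2_general [Finite m] :
    Set.BijOn transferMatrix (isometriesWithUnitCorner m n p K) (indefiniteIsometries m n p K) ∧
    Set.InvOn scatteringMatrix transferMatrix
      (isometriesWithUnitCorner m n p K) (indefiniteIsometries m n p K) := by
  have hinv : Set.InvOn scatteringMatrix transferMatrix
      (isometriesWithUnitCorner m n p K) (indefiniteIsometries m n p K) :=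
    ⟨fun _ hS => scatteringMatrix_transferMatrix hS.2, fun _ hT =>
      transferMatrix_scatteringMatrix (isUnit_toBlocks₂₂_of_mem_indefiniteIsometries hT)⟩
  have hmaps : Set.MapsTo transferMatrix
      (isometriesWithUnitCorner m n p K) (indefiniteIsometries m n p K) :=
    fun _ hS => (transferMatrix_mem_indefiniteIsometries_iff hS.2).2 hS.1
  exact ⟨hinv.bijOn hmaps fun _ hT => scatteringMatrix_mem_isometriesWithUnitCorner hT, hinv⟩

end StarOrderedField

theorem U2Linv_eq_isometriesWithUnitCorner (L : ℕ) :
    U2Linv L = isometriesWithUnitCorner (Fin L) (Fin L) (Fin L) ℂ := by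
  ext S
  exact and_congr_left' mem_unitaryGroup_iff'

theorem ULL_eq_indefiniteIsometries (L : ℕ) :
    ULL L = indefiniteIsometries (Fin L) (Fin L) (Fin L) ℂ := by
  simp only [ULL, indefiniteIsometries, Lform, indefiniteDiagonal_eq_fromBlocks]

/-- `φ` is a bijection from `U(2L)_inv` onto `U(L,L)`, with inverse `ψ`. -/
theorem stmt_2 (L : ℕ) (hL : 1 ≤ L) :
    Set.BijOn (phiMap (L := L)) (U2Linv L) (ULL L) ∧
    Set.InvOn (psiMap (L := L)) (phiMap (L := L)) (U2Linv L) (ULL L) := by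
  rw [U2Linv_eq_isometriesWithUnitCorner, ULL_eq_indefiniteIsometries]
  open scoped ComplexOrder in exact stmt_2_general
end

section
/- Let S = [[α, β],[γ, δ]] ∈ U(2L)_inv and set φ(S) = [[γ − δβ⁻¹α, δβ⁻¹],[−β⁻¹α, β⁻¹]]. Then for any vectors φ, φ', ψ, ψ' ∈ ℂ^L, one has S·(ψ, ψ')ᵀ = (φ, φ')ᵀ if and only if φ(S)·(ψ, φ)ᵀ = (φ', ψ')ᵀ. -/
open Matrix

/-! The first block row `αq + βq' = p` can be solved for `q'`, giving `q' = β⁻¹(p − αq)`, which is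
the second block row of `φ(S)`. Substituting this into `γq + δq' = p'` gives the first block row of
`φ(S)`. Both steps are reversible. -/

section

variable {R l m n o : Type*} [Fintype l] [Fintype m]

theorem fromBlocks_mulVec_elim_eq_elim_iff [NonUnitalNonAssocSemiring R]
    {A : Matrix n l R} {B : Matrix n m R} {C : Matrix o l R} {D : Matrix o m R}
    {x : l → R} {y : m → R} {u : n → R} {v : o → R} :
    fromBlocks A B C D *ᵥ Sum.elim x y = Sum.elim u v ↔
      A *ᵥ x + B *ᵥ y = u ∧ C *ᵥ x + D *ᵥ y = v := by
  rw [fromBlocks_mulVec, Sum.elim_comp_inl, Sum.elim_comp_inr, Sum.elim_eq_iff]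

theorem mulVec_eq_iff_eq_invOf_mulVec [Semiring R] [DecidableEq m] {A : Matrix m m R}
    [Invertible A] {v w : m → R} : A *ᵥ v = w ↔ v = ⅟A *ᵥ w := by
  constructor
  · rintro rfl
    rw [mulVec_mulVec, invOf_mul_self, one_mulVec]
  · rintro rfl
    rw [mulVec_mulVec, mul_invOf_self, one_mulVec]

variable [Ring R] [DecidableEq m] {α : Matrix m l R} {β : Matrix m m R} [Invertible β]
  {q : l → R} {p q' : m → R}

theorem mulVec_add_mulVec_eq_iff_eq_invOf_mulVec_sub :
    α *ᵥ q + β *ᵥ q' = p ↔ q' = ⅟β *ᵥ (p - α *ᵥ q) := by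
  rw [← eq_sub_iff_add_eq', mulVec_eq_iff_eq_invOf_mulVec]

theorem stmt_3_general {γ : Matrix n l R} {δ : Matrix n m R} {p' : n → R} :
    fromBlocks α β γ δ *ᵥ Sum.elim q q' = Sum.elim p p' ↔
      fromBlocks (γ - δ * ⅟β * α) (δ * ⅟β) (-(⅟β * α)) ⅟β *ᵥ Sum.elim q p =
        Sum.elim p' q' := by
  have first_row : (γ - δ * ⅟β * α) *ᵥ q + (δ * ⅟β) *ᵥ p =
      γ *ᵥ q + δ *ᵥ ⅟β *ᵥ (p - α *ᵥ q) := by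
    simp only [sub_mulVec, mulVec_sub, ← mulVec_mulVec]
    abel
  have second_row : -(⅟β * α) *ᵥ q + ⅟β *ᵥ p = ⅟β *ᵥ (p - α *ᵥ q) := by
    rw [neg_mulVec, ← mulVec_mulVec, mulVec_sub, neg_add_eq_sub]
  rw [fromBlocks_mulVec_elim_eq_elim_iff, fromBlocks_mulVec_elim_eq_elim_iff, first_row,
    second_row, mulVec_add_mulVec_eq_iff_eq_invOf_mulVec_sub]
  constructor
  · rintro ⟨rfl, h⟩
    exact ⟨h, rfl⟩
  · rintro ⟨h, rfl⟩
    exact ⟨rfl, h⟩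

end

/-- For `S = [[α, β],[γ, δ]]` unitary with `β` invertible and
`φ(S) = [[γ − δβ⁻¹α, δβ⁻¹],[−β⁻¹α, β⁻¹]]`, one has
`S (ψ, ψ')ᵀ = (φ, φ')ᵀ ↔ φ(S) (ψ, φ)ᵀ = (φ', ψ')ᵀ`. -/
theorem stmt_3 (L : ℕ) (hL : 1 ≤ L)
    (α β γ δ : Matrix (Fin L) (Fin L) ℂ)
    (hS : fromBlocks α β γ δ ∈ Matrix.unitaryGroup (Fin L ⊕ Fin L) ℂ)
    (hβ : IsUnit β)
    (p p' q q' : Fin L → ℂ) :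
    (fromBlocks α β γ δ).mulVec (Sum.elim q q') = Sum.elim p p' ↔
      (fromBlocks (γ - δ * β⁻¹ * α) (δ * β⁻¹) (-(β⁻¹ * α)) β⁻¹).mulVec (Sum.elim q p) =
        Sum.elim p' q' := by
  let := hβ.invertible
  simpa only [invOf_eq_nonsing_inv] using stmt_3_general (β := β)
end

section
/- Let Ψ and Φ be 2L×L complex matrices of rank L such that Ψ*𝓛Ψ = 0 and such that Φ*𝓛Φ is either positive definite or negative definite. Then the L×L matrix Ψ*𝓛Φ is invertible. -/
open Matrix
open scoped ComplexOrder

/-!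
The range of `Ψ` is isotropic for the nondegenerate form `𝓛` and has half the dimension of the
space, so it is equal to its own orthogonal complement, the kernel of `Ψ*𝓛`. Hence if
`Ψ*𝓛Φ v = 0`, then `Φ v` lies in the range of `Ψ` and is isotropic, which forces `v = 0` by
definiteness of `Φ*𝓛Φ`.
-/

theorem finrank_map_semilinearEquiv {R S V W : Type*} [Semiring R] [Semiring S]
    [AddCommMonoid V] [AddCommMonoid W] [Module R V] [Module S W] {σ : R →+* S} {τ : S →+* R}
    [RingHomInvPair σ τ] [RingHomInvPair τ σ] (e : V ≃ₛₗ[σ] W) (p : Submodule R V) :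
    Module.finrank S (p.map e.toLinearMap) = Module.finrank R p := by
  have hσ : Function.Bijective σ := (RingHomInvPair.toRingEquiv σ τ).bijective
  have hrank := lift_rank_eq_of_equiv_equiv σ (e.submoduleMap p).toAddEquiv hσ
    (e.submoduleMap p).map_smulₛₗ
  simpa only [Module.finrank, Cardinal.toNat_lift] using congrArg Cardinal.toNat hrank.symm

section Field

variable {K l m n : Type*} [Field K] [Fintype m] [Fintype n]

theorem ker_mulVecLin_eq_range_of_mul_eq_zero {A : Matrix l n K} {B : Matrix n m K}
    (hAB : A * B = 0) (hrank : A.rank + B.rank = Fintype.card n) :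
    LinearMap.ker A.mulVecLin = LinearMap.range B.mulVecLin := by
  have hle : LinearMap.range B.mulVecLin ≤ LinearMap.ker A.mulVecLin := by
    rw [LinearMap.range_le_ker_iff, ← mulVecLin_mul, hAB, mulVecLin_zero]
  have hnullity : A.rank + Module.finrank K (LinearMap.ker A.mulVecLin) = Fintype.card n := by
    rw [rank, LinearMap.finrank_range_add_finrank_ker, Module.finrank_pi]
  refine (Submodule.eq_of_le_of_finrank_eq hle ?_).symm
  change B.rank = _
  lia

variable [StarRing K]

/-- `Matrix.rank_conjTranspose` asks for a `StarOrderedRing`, which excludes involutions such as the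
trivial one on `ℂ`. -/
theorem rank_conjTranspose_of_field (A : Matrix n m K) : Aᴴ.rank = A.rank := by
  have hspan : Submodule.span K (Set.range Aᴴ.row) =
      (Submodule.span K (Set.range A.col)).map (starLinearEquiv K (A := n → K)).toLinearMap := by
    rw [Submodule.map_span, ← Set.range_comp]
    rfl
  rw [rank_eq_finrank_span_row, hspan, finrank_map_semilinearEquiv, rank_eq_finrank_span_cols]

theorem star_dotProduct_conjTranspose_mul_mul_mulVec (J : Matrix n n K) (A : Matrix n m K)
    (v : m → K) :
    star v ⬝ᵥ ((Aᴴ * J * A) *ᵥ v) = star (A *ᵥ v) ⬝ᵥ (J *ᵥ (A *ᵥ v)) := by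
  rw [star_mulVec, ← dotProduct_mulVec, mulVec_mulVec, mulVec_mulVec, Matrix.mul_assoc]

variable [DecidableEq n] {J : Matrix n n K} {Ψ : Matrix n m K}

theorem ker_conjTranspose_mul_eq_range_of_isotropic (hJ : IsUnit J)
    (hrank : 2 * Ψ.rank = Fintype.card n) (hΨ : Ψᴴ * J * Ψ = 0) :
    LinearMap.ker (Ψᴴ * J).mulVecLin = LinearMap.range Ψ.mulVecLin := by
  refine ker_mulVecLin_eq_range_of_mul_eq_zero hΨ ?_
  rw [rank_mul_eq_left_of_isUnit_det J _ ((isUnit_iff_isUnit_det J).mp hJ),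
    rank_conjTranspose_of_field, ← two_mul, hrank]

theorem stmt_9_general [DecidableEq m] {Φ : Matrix n m K} (hJ : IsUnit J)
    (hrank : 2 * Ψ.rank = Fintype.card n) (hΨ : Ψᴴ * J * Ψ = 0)
    (hΦ : ∀ v ≠ 0, star v ⬝ᵥ ((Φᴴ * J * Φ) *ᵥ v) ≠ 0) :
    IsUnit (Ψᴴ * J * Φ) := by
  rw [← mulVec_injective_iff_isUnit, ← coe_mulVecLin, ← LinearMap.ker_eq_bot, LinearMap.ker_eq_bot']
  intro v hv
  have hmem : Φ *ᵥ v ∈ LinearMap.ker (Ψᴴ * J).mulVecLin := by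
    rwa [LinearMap.mem_ker, mulVecLin_apply, mulVec_mulVec]
  rw [ker_conjTranspose_mul_eq_range_of_isotropic hJ hrank hΨ] at hmem
  obtain ⟨u, hu : Ψ *ᵥ u = Φ *ᵥ v⟩ := hmem
  by_contra hv_ne
  apply hΦ v hv_ne
  calc star v ⬝ᵥ ((Φᴴ * J * Φ) *ᵥ v)
      = star (Ψ *ᵥ u) ⬝ᵥ (J *ᵥ (Ψ *ᵥ u)) := by
        rw [star_dotProduct_conjTranspose_mul_mul_mulVec, hu]
    _ = star u ⬝ᵥ ((Ψᴴ * J * Ψ) *ᵥ u) := (star_dotProduct_conjTranspose_mul_mul_mulVec J Ψ u).symm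
    _ = 0 := by rw [hΨ, zero_mulVec, dotProduct_zero]

end Field

theorem isUnit_Lform (L : ℕ) : IsUnit (Lform L) := by
  have hsq : Lform L * Lform L = 1 := by simp [Lform, fromBlocks_multiply]
  exact IsUnit.of_mul_eq_one _ hsq

theorem dotProduct_mulVec_ne_zero_of_posDef_or_neg_posDef {m R : Type*} [Fintype m] [CommRing R]
    [PartialOrder R] [StarRing R] {M : Matrix m m R} (hM : M.PosDef ∨ (-M).PosDef) {v : m → R}
    (hv : v ≠ 0) :
    star v ⬝ᵥ (M *ᵥ v) ≠ 0 := by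
  rcases hM with hpos | hneg
  · exact (hpos.dotProduct_mulVec_pos hv).ne'
  · rw [← neg_ne_zero, ← dotProduct_neg, ← neg_mulVec]
    exact (hneg.dotProduct_mulVec_pos hv).ne'

/-- If `Ψ`, `Φ` are `2L×L` matrices of rank `L` with `Ψ*𝓛Ψ = 0` and
`Φ*𝓛Φ` positive or negative definite, then `Ψ*𝓛Φ` is invertible. -/
theorem stmt_9 (L : ℕ) (hL : 1 ≤ L)
    (Ψ Φ : Matrix (Fin L ⊕ Fin L) (Fin L) ℂ)
    (hΨrank : Ψ.rank = L) (hΦrank : Φ.rank = L)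
    (hΨ : Ψᴴ * Lform L * Ψ = 0)
    (hΦ : (Φᴴ * Lform L * Φ).PosDef ∨ (-(Φᴴ * Lform L * Φ)).PosDef) :
    IsUnit (Ψᴴ * Lform L * Φ) :=
  stmt_9_general (isUnit_Lform L) (by simp [hΨrank, two_mul]) hΨ
    fun _ hv ↦ dotProduct_mulVec_ne_zero_of_posDef_or_neg_posDef hΦ hv
end

section
/- Let Φ be a 2L×L complex matrix of rank L, written as a stacked pair Φ = (a; b) with a, b of size L×L, such that Φ*𝓛Φ = 0 (Φ is 𝓛-Lagrangian). Then both a and b are invertible and a·b⁻¹ is unitary. Consequently Φ = (U; 1)·b with the unitary U = a·b⁻¹, and the map sending the column space of an 𝓛-Lagrangian frame Φ = (a; b) to a·b⁻¹ is a bijection from the set of 𝓛-Lagrangian L-dimensional subspaces of ℂ^{2L} onto the unitary group U(L). -/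
open Matrix
open scoped ComplexOrder

/-!
For a frame `(a; b)`, being isotropic means `aᴴ * a = bᴴ * b`. Then the Gram matrix
`aᴴ * a + bᴴ * b` is `2 bᴴ * b`, so full rank of the frame forces `b`, and hence `a`, to be
invertible. Therefore the column space is the graph `{(U x, x)}` of `U = a * b⁻¹`, which
determines `U`, and `aᴴ * a = bᴴ * b` says precisely that `U` is unitary.
-/

section GramMatrix

variable {m p k R : Type*} [Fintype m] [Fintype p]

lemma conjTranspose_fromRows_mul_self [Semiring R] [StarRing R]
    (a : Matrix m k R) (b : Matrix p k R) :
    (fromRows a b)ᴴ * fromRows a b = aᴴ * a + bᴴ * b := by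
  rw [conjTranspose_fromRows_eq_fromCols_conjTranspose, fromCols_mul_fromRows]

lemma conjTranspose_fromRows_mul_signature_mul_self [DecidableEq m] [DecidableEq p] [Ring R]
    [StarRing R] (a : Matrix m k R) (b : Matrix p k R) :
    (fromRows a b)ᴴ * (fromBlocks 1 0 0 (-1) : Matrix (m ⊕ p) (m ⊕ p) R) * fromRows a b =
      aᴴ * a - bᴴ * b := by
  rw [Matrix.mul_assoc, fromBlocks_mul_fromRows,
    conjTranspose_fromRows_eq_fromCols_conjTranspose, fromCols_mul_fromRows]
  simp [sub_eq_add_neg]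

end GramMatrix

section Rank

variable {m p k : Type*} [Fintype k]

lemma rank_le_rank_fromRows_right {R : Type*} [CommSemiring R] [StrongRankCondition R]
    (a : Matrix m k R) (b : Matrix p k R) : b.rank ≤ (fromRows a b).rank :=
  rank_submatrix_le (fromRows a b) Sum.inr id

variable {K : Type*} [Field K]

lemma isUnit_iff_rank_eq_card [DecidableEq k] (A : Matrix k k K) :
    IsUnit A ↔ A.rank = Fintype.card k := by
  refine ⟨rank_of_isUnit A, fun rank_eq => mulVec_surjective_iff_isUnit.mp ?_⟩
  have range_eq_top : LinearMap.range A.mulVecLin = ⊤ :=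
    Submodule.eq_top_of_finrank_eq (rank_eq.trans (Module.finrank_fintype_fun_eq_card K).symm)
  exact LinearMap.range_eq_top.mp range_eq_top

lemma rank_fromRows_of_conjTranspose_mul_self_eq [Fintype m] [Fintype p] [PartialOrder K]
    [StarRing K] [StarOrderedRing K] {a : Matrix m k K} {b : Matrix p k K}
    (h : aᴴ * a = bᴴ * b) : (fromRows a b).rank = b.rank := by
  refine le_antisymm ?_ (rank_le_rank_fromRows_right a b)
  calc (fromRows a b).rank = ((bᴴ + bᴴ) * b).rank := by
        rw [← rank_conjTranspose_mul_self, conjTranspose_fromRows_mul_self, h, Matrix.add_mul]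
    _ ≤ b.rank := rank_mul_le_right _ _

end Rank

section ColumnSpace

variable {m n R : Type*} [Fintype n] [DecidableEq n]

lemma range_mulVecLin_mul_of_isUnit [CommRing R] (A : Matrix m n R) {c : Matrix n n R}
    (hc : IsUnit c) :
    LinearMap.range (A * c).mulVecLin = LinearMap.range A.mulVecLin := by
  rw [mulVecLin_mul, LinearMap.range_comp_of_range_eq_top]
  exact LinearMap.range_eq_top.mpr (mulVec_surjective_iff_isUnit.mpr hc)

lemma range_mulVecLin_fromRows_one_inj [CommSemiring R] {u v : Matrix m n R} :
    LinearMap.range (fromRows u (1 : Matrix n n R)).mulVecLin =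
      LinearMap.range (fromRows v (1 : Matrix n n R)).mulVecLin ↔ u = v := by
  refine ⟨fun range_eq => ext_of_mulVec_single fun i => ?_, fun h => by rw [h]⟩
  obtain ⟨y, hy⟩ : (fromRows u (1 : Matrix n n R)).mulVecLin (Pi.single i 1) ∈
      LinearMap.range (fromRows v (1 : Matrix n n R)).mulVecLin :=
    range_eq ▸ LinearMap.mem_range_self _ _
  simp only [mulVecLin_apply, fromRows_mulVec, one_mulVec] at hy
  obtain ⟨top_eq, bottom_eq⟩ := Sum.elim_eq_iff.mp hy
  rw [← top_eq, bottom_eq]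

variable [CommRing R]

lemma fromRows_eq_fromRows_mul_inv_one_mul (a : Matrix m n R) {b : Matrix n n R}
    (hb : IsUnit b) : fromRows a b = fromRows (a * b⁻¹) 1 * b := by
  rw [fromRows_mul, nonsing_inv_mul_cancel_right _ _ ((isUnit_iff_isUnit_det b).mp hb),
    Matrix.one_mul]

lemma range_mulVecLin_fromRows_eq_iff {a c : Matrix m n R} {b d : Matrix n n R}
    (hb : IsUnit b) (hd : IsUnit d) :
    LinearMap.range (fromRows a b).mulVecLin = LinearMap.range (fromRows c d).mulVecLin ↔
      a * b⁻¹ = c * d⁻¹ := by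
  rw [fromRows_eq_fromRows_mul_inv_one_mul a hb, fromRows_eq_fromRows_mul_inv_one_mul c hd,
    range_mulVecLin_mul_of_isUnit _ hb, range_mulVecLin_mul_of_isUnit _ hd,
    range_mulVecLin_fromRows_one_inj]

end ColumnSpace

lemma mul_inv_mem_unitaryGroup {n R : Type*} [Fintype n] [DecidableEq n] [CommRing R]
    [StarRing R] {a b : Matrix n n R} (hb : IsUnit b) (h : aᴴ * a = bᴴ * b) :
    a * b⁻¹ ∈ unitaryGroup n R := by
  rw [mem_unitaryGroup_iff', star_eq_conjTranspose]
  calc (a * b⁻¹)ᴴ * (a * b⁻¹) = (b⁻¹)ᴴ * (aᴴ * a) * b⁻¹ := by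
        simp only [conjTranspose_mul, Matrix.mul_assoc]
    _ = (b * b⁻¹)ᴴ * (b * b⁻¹) := by
        simp only [h, conjTranspose_mul, Matrix.mul_assoc]
    _ = 1 := by
        rw [mul_nonsing_inv b ((isUnit_iff_isUnit_det b).mp hb), conjTranspose_one,
          Matrix.one_mul]

section LagrangianFrame

variable {n K : Type*} [Fintype n] [DecidableEq n] [Field K] [StarRing K]

/-- A Lagrangian frame for the Hermitian form `diag(1, -1)` on `Kⁿ ⊕ Kⁿ`: a matrix of full column
rank whose columns span a subspace on which the form vanishes. -/
def IsLagrangianFrame (Φ : Matrix (n ⊕ n) n K) : Prop :=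
  Φ.rank = Fintype.card n ∧ Φᴴ * (fromBlocks 1 0 0 (-1) : Matrix (n ⊕ n) (n ⊕ n) K) * Φ = 0

variable [PartialOrder K] [StarOrderedRing K] {a b : Matrix n n K}

lemma isLagrangianFrame_fromRows_iff :
    IsLagrangianFrame (fromRows a b) ↔ IsUnit b ∧ aᴴ * a = bᴴ * b := by
  rw [IsLagrangianFrame, conjTranspose_fromRows_mul_signature_mul_self, sub_eq_zero]
  refine and_congr_left fun isotropic => ?_
  rw [rank_fromRows_of_conjTranspose_mul_self_eq isotropic, isUnit_iff_rank_eq_card]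

namespace IsLagrangianFrame

lemma isUnit_bottom (h : IsLagrangianFrame (fromRows a b)) : IsUnit b :=
  (isLagrangianFrame_fromRows_iff.mp h).1

lemma conjTranspose_mul_self_eq (h : IsLagrangianFrame (fromRows a b)) : aᴴ * a = bᴴ * b :=
  (isLagrangianFrame_fromRows_iff.mp h).2

lemma isUnit_top (h : IsLagrangianFrame (fromRows a b)) : IsUnit a := by
  have isUnit_gram : IsUnit (aᴴ * a) := by
    rw [h.conjTranspose_mul_self_eq]
    exact h.isUnit_bottom.star.mul h.isUnit_bottom
  exact isUnit_of_mul_isUnit_right isUnit_gram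

end IsLagrangianFrame

lemma isLagrangianFrame_fromRows_one {W : Matrix n n K} (hW : W ∈ unitaryGroup n K) :
    IsLagrangianFrame (fromRows W 1) := by
  rw [mem_unitaryGroup_iff', star_eq_conjTranspose] at hW
  exact isLagrangianFrame_fromRows_iff.mpr ⟨isUnit_one, by simp [hW]⟩

end LagrangianFrame

theorem stmt_17_general (n K : Type*) [Fintype n] [DecidableEq n] [Field K] [StarRing K]
    [PartialOrder K] [StarOrderedRing K] :
    (∀ a b : Matrix n n K, IsLagrangianFrame (fromRows a b) →
      IsUnit a ∧ IsUnit b ∧ a * b⁻¹ ∈ unitaryGroup n K ∧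
        fromRows a b = fromRows (a * b⁻¹) 1 * b) ∧
    (∀ a b c d : Matrix n n K,
      IsLagrangianFrame (fromRows a b) → IsLagrangianFrame (fromRows c d) →
      (LinearMap.range (fromRows a b).mulVecLin = LinearMap.range (fromRows c d).mulVecLin ↔
        a * b⁻¹ = c * d⁻¹)) ∧
    (∀ W ∈ unitaryGroup n K, ∃ a b : Matrix n n K,
      IsLagrangianFrame (fromRows a b) ∧ a * b⁻¹ = W) := by
  refine ⟨fun a b h => ⟨h.isUnit_top, h.isUnit_bottom, ?_, ?_⟩, fun a b c d hab hcd => ?_,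
    fun W hW => ⟨W, 1, isLagrangianFrame_fromRows_one hW, by simp⟩⟩
  · exact mul_inv_mem_unitaryGroup h.isUnit_bottom h.conjTranspose_mul_self_eq
  · exact fromRows_eq_fromRows_mul_inv_one_mul a h.isUnit_bottom
  · exact range_mulVecLin_fromRows_eq_iff hab.isUnit_bottom hcd.isUnit_bottom

/-- For every `𝓛`-Lagrangian frame `Φ = (a; b)` of rank `L`, both `a` and `b`
are invertible, `a·b⁻¹` is unitary and `Φ = (a·b⁻¹; 1)·b`; moreover the map sending the
column space of a Lagrangian frame to `a·b⁻¹` is well defined and injective (two Lagrangian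
frames have the same column space iff they have the same value `a·b⁻¹`) and surjective onto
the unitary group `U(L)`. -/
theorem stmt_17 (L : ℕ) (hL : 1 ≤ L) :
    (∀ a b : Matrix (Fin L) (Fin L) ℂ,
      (fromRows a b).rank = L → (fromRows a b)ᴴ * Lform L * fromRows a b = 0 →
        IsUnit a ∧ IsUnit b ∧ a * b⁻¹ ∈ Matrix.unitaryGroup (Fin L) ℂ ∧
        fromRows a b = fromRows (a * b⁻¹) 1 * b) ∧
    (∀ a b c d : Matrix (Fin L) (Fin L) ℂ,
      (fromRows a b).rank = L → (fromRows a b)ᴴ * Lform L * fromRows a b = 0 →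
      (fromRows c d).rank = L → (fromRows c d)ᴴ * Lform L * fromRows c d = 0 →
      (LinearMap.range (fromRows a b).mulVecLin = LinearMap.range (fromRows c d).mulVecLin ↔
        a * b⁻¹ = c * d⁻¹)) ∧
    (∀ W ∈ Matrix.unitaryGroup (Fin L) ℂ, ∃ a b : Matrix (Fin L) (Fin L) ℂ,
      (fromRows a b).rank = L ∧ (fromRows a b)ᴴ * Lform L * fromRows a b = 0 ∧
      a * b⁻¹ = W) := by
  simpa only [IsLagrangianFrame, Lform, Fintype.card_fin, and_imp, and_assoc] using
    stmt_17_general (Fin L) ℂ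
end

section
/- Let Φ = (a; b) and Ψ = (c; d) be 𝓛-Lagrangian frames (so a, b, c, d are invertible and a·b⁻¹, c·d⁻¹ are unitary), and set W = (a·b⁻¹)*·(c·d⁻¹). Then the dimension of the intersection of the column spaces of Φ and Ψ equals the dimension of the kernel of the L×L matrix Φ*𝓛Ψ, and both equal the multiplicity of 1 as an eigenvalue of the unitary matrix W (i.e. the dimension of the kernel of W − 1). -/
open Matrix
open scoped ComplexOrder

/-! A frame `Φ` of a Lagrangian subspace for an invertible form `J` satisfies
`range Φ = ker (Φᴴ * J)`: isotropy is one inclusion, and the dimensions agree. Hence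
`range Φ ⊓ range Ψ` is the image under the injective map `Ψ` of `ker (Φᴴ * J * Ψ)`. For
`J = diag(1, -1)`, the matrix `Φᴴ * J * Ψ = aᴴ * c - bᴴ * d` differs from
`(a * b⁻¹)ᴴ * (c * d⁻¹) - 1` by the invertible factors `bᴴ` on the left and `d` on the right. -/

section Field

variable {m n R : Type*} [Fintype n] [Field R]

theorem mulVec_injective_of_rank_eq_card {A : Matrix m n R} (hA : A.rank = Fintype.card n) :
    Function.Injective A.mulVec := by
  rw [mulVec_injective_iff, linearIndependent_iff_card_eq_finrank_span, Set.finrank,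
    ← rank_eq_finrank_span_cols, hA]

theorem rank_add_finrank_ker_mulVecLin (A : Matrix m n R) :
    A.rank + Module.finrank R (LinearMap.ker A.mulVecLin) = Fintype.card n :=
  A.mulVecLin.finrank_range_add_finrank_ker.trans (Module.finrank_fintype_fun_eq_card R)

theorem finrank_ker_mulVecLin_mul_mul_of_isUnit [Fintype m] [DecidableEq m] [DecidableEq n]
    {P : Matrix m m R} {Q : Matrix n n R} (hP : IsUnit P) (hQ : IsUnit Q) (A : Matrix m n R) :
    Module.finrank R (LinearMap.ker (P * A * Q).mulVecLin) =
      Module.finrank R (LinearMap.ker A.mulVecLin) := by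
  have hrank : (P * A * Q).rank = A.rank := by
    rw [rank_mul_eq_left_of_isUnit_det _ _ ((isUnit_iff_isUnit_det Q).mp hQ),
      rank_mul_eq_right_of_isUnit_det _ _ ((isUnit_iff_isUnit_det P).mp hP)]
  have hPAQ := rank_add_finrank_ker_mulVecLin (P * A * Q)
  have hA := rank_add_finrank_ker_mulVecLin A
  lia

end Field

section SplitForm

variable {n k l R : Type*}

/-- The form `diag(1, -1)` on a space split into two summands indexed by `n`; over `ℂ`, with
`n = Fin L`, it is `Lform L`. -/
def splitForm (n R : Type*) [DecidableEq n] [Ring R] : Matrix (n ⊕ n) (n ⊕ n) R :=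
  fromBlocks 1 0 0 (-1)

theorem isUnit_splitForm [Fintype n] [DecidableEq n] [Ring R] : IsUnit (splitForm n R) := by
  have hsq : splitForm n R * splitForm n R = 1 := by simp [splitForm, fromBlocks_multiply]
  exact isUnit_iff_exists.mpr ⟨_, hsq, hsq⟩

theorem conjTranspose_fromRows_mul_splitForm_mul_fromRows [Fintype n] [DecidableEq n] [Ring R]
    [StarRing R] (a b : Matrix n k R) (c d : Matrix n l R) :
    (fromRows a b)ᴴ * splitForm n R * fromRows c d = aᴴ * c - bᴴ * d := by
  simp [splitForm, conjTranspose_fromRows_eq_fromCols_conjTranspose, fromCols_mul_fromBlocks,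
    fromCols_mul_fromRows, sub_eq_add_neg]

theorem conjTranspose_mul_sub_conjTranspose_mul_eq [Fintype n] [DecidableEq n] [CommRing R]
    [StarRing R] (a c : Matrix n n R) {b d : Matrix n n R} (hb : IsUnit b) (hd : IsUnit d) :
    aᴴ * c - bᴴ * d = bᴴ * ((a * b⁻¹)ᴴ * (c * d⁻¹) - 1) * d := by
  have ha : bᴴ * (a * b⁻¹)ᴴ = aᴴ := by
    rw [← conjTranspose_mul, nonsing_inv_mul_cancel_right _ _ ((isUnit_iff_isUnit_det b).mp hb)]
  have hc : c * d⁻¹ * d = c :=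
    nonsing_inv_mul_cancel_right _ _ ((isUnit_iff_isUnit_det d).mp hd)
  rw [mul_sub, sub_mul, mul_one, ← Matrix.mul_assoc, ha, Matrix.mul_assoc, hc]

end SplitForm

/-- The columns of `Φ` form a basis of a Lagrangian subspace for the form `J`, that is, of an
isotropic subspace of half the dimension. -/
structure IsLagrangianFrame_s18 {m n R : Type*} [Fintype m] [Fintype n] [CommRing R] [StarRing R]
    (J : Matrix m m R) (Φ : Matrix m n R) : Prop where
  card_eq : Fintype.card m = 2 * Fintype.card n
  rank_eq : Φ.rank = Fintype.card n
  isotropic : Φᴴ * J * Φ = 0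

namespace IsLagrangianFrame_s18

variable {m n k R : Type*} [Fintype m] [Fintype n] [Fintype k] [DecidableEq m]
  [Field R] [PartialOrder R] [StarRing R] [StarOrderedRing R]

theorem range_eq_ker {J : Matrix m m R} {Φ : Matrix m n R} (hΦ : IsLagrangianFrame_s18 J Φ)
    (hJ : IsUnit J) :
    LinearMap.range Φ.mulVecLin = LinearMap.ker (Φᴴ * J).mulVecLin := by
  have hle : LinearMap.range Φ.mulVecLin ≤ LinearMap.ker (Φᴴ * J).mulVecLin := by
    rw [LinearMap.range_le_ker_iff, ← mulVecLin_mul, hΦ.isotropic, mulVecLin_zero]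
  have hrank : (Φᴴ * J).rank = Fintype.card n := by
    rw [rank_mul_eq_left_of_isUnit_det _ _ ((isUnit_iff_isUnit_det J).mp hJ), rank_conjTranspose,
      hΦ.rank_eq]
  refine Submodule.eq_of_le_of_finrank_eq hle ?_
  have hrange : Module.finrank R (LinearMap.range Φ.mulVecLin) = Fintype.card n := hΦ.rank_eq
  have hker := rank_add_finrank_ker_mulVecLin (Φᴴ * J)
  have hcard := hΦ.card_eq
  lia

theorem finrank_range_inf_range {J : Matrix m m R} {Φ : Matrix m n R}
    (hΦ : IsLagrangianFrame_s18 J Φ) (hJ : IsUnit J) {Ψ : Matrix m k R}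
    (hΨ : Function.Injective Ψ.mulVec) :
    Module.finrank R ↥(LinearMap.range Φ.mulVecLin ⊓ LinearMap.range Ψ.mulVecLin) =
      Module.finrank R (LinearMap.ker (Φᴴ * J * Ψ).mulVecLin) := by
  rw [hΦ.range_eq_ker hJ, inf_comm, ← Submodule.map_comap_eq, ← LinearMap.ker_comp,
    ← mulVecLin_mul]
  exact (Submodule.equivMapOfInjective Ψ.mulVecLin hΨ _).finrank_eq.symm

theorem isUnit_lowerBlock [DecidableEq n] {a b : Matrix n n R}
    (hab : IsLagrangianFrame_s18 (splitForm n R) (fromRows a b)) : IsUnit b := by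
  have hnorm : aᴴ * a = bᴴ * b := by
    rw [← sub_eq_zero, ← conjTranspose_fromRows_mul_splitForm_mul_fromRows, hab.isotropic]
  rw [← mulVec_injective_iff_isUnit, ← coe_mulVecLin, injective_iff_map_eq_zero]
  intro v (hbv : b *ᵥ v = 0)
  have hav : a *ᵥ v = 0 := by
    rw [← conjTranspose_mul_self_mulVec_eq_zero, hnorm, ← mulVec_mulVec, hbv, mulVec_zero]
  apply mulVec_injective_of_rank_eq_card hab.rank_eq
  rw [fromRows_mulVec, hav, hbv, mulVec_zero, Sum.elim_zero_zero]

end IsLagrangianFrame_s18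

theorem stmt_18_general {n R : Type*} [Fintype n] [DecidableEq n] [Field R] [PartialOrder R]
    [StarRing R] [StarOrderedRing R] {a b c d : Matrix n n R}
    (hΦ : IsLagrangianFrame_s18 (splitForm n R) (fromRows a b))
    (hΨ : IsLagrangianFrame_s18 (splitForm n R) (fromRows c d)) :
    Module.finrank R
        ↥(LinearMap.range (fromRows a b).mulVecLin ⊓
            LinearMap.range (fromRows c d).mulVecLin) =
      Module.finrank R
        ↥(LinearMap.ker ((fromRows a b)ᴴ * splitForm n R * fromRows c d).mulVecLin) ∧
    Module.finrank R
        ↥(LinearMap.ker ((fromRows a b)ᴴ * splitForm n R * fromRows c d).mulVecLin) =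
      Module.finrank R
        ↥(LinearMap.ker ((a * b⁻¹)ᴴ * (c * d⁻¹) - 1).mulVecLin) := by
  refine ⟨hΦ.finrank_range_inf_range isUnit_splitForm
    (mulVec_injective_of_rank_eq_card hΨ.rank_eq), ?_⟩
  have hb : IsUnit b := hΦ.isUnit_lowerBlock
  have hbH : IsUnit bᴴ := hb.star
  have hd : IsUnit d := hΨ.isUnit_lowerBlock
  rw [conjTranspose_fromRows_mul_splitForm_mul_fromRows,
    conjTranspose_mul_sub_conjTranspose_mul_eq a c hb hd,
    finrank_ker_mulVecLin_mul_mul_of_isUnit hbH hd]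

/-- For two `𝓛`-Lagrangian frames `Φ = (a; b)` and `Ψ = (c; d)` with
`W = (a·b⁻¹)*·(c·d⁻¹)`, the dimension of the intersection of the column spaces of `Φ`
and `Ψ` equals the dimension of the kernel of `Φ*𝓛Ψ`, and both equal the multiplicity
of `1` as an eigenvalue of `W`, i.e. the dimension of the kernel of `W − 1`. -/
theorem stmt_18 (L : ℕ) (hL : 1 ≤ L)
    (a b c d : Matrix (Fin L) (Fin L) ℂ)
    (hΦrank : (fromRows a b).rank = L)
    (hΦ : (fromRows a b)ᴴ * Lform L * fromRows a b = 0)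
    (hΨrank : (fromRows c d).rank = L)
    (hΨ : (fromRows c d)ᴴ * Lform L * fromRows c d = 0) :
    Module.finrank ℂ
        ↥(LinearMap.range (fromRows a b).mulVecLin ⊓
            LinearMap.range (fromRows c d).mulVecLin) =
      Module.finrank ℂ
        ↥(LinearMap.ker ((fromRows a b)ᴴ * Lform L * fromRows c d).mulVecLin) ∧
    Module.finrank ℂ
        ↥(LinearMap.ker ((fromRows a b)ᴴ * Lform L * fromRows c d).mulVecLin) =
      Module.finrank ℂ
        ↥(LinearMap.ker ((a * b⁻¹)ᴴ * (c * d⁻¹) - 1).mulVecLin) := by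
  have hcard : Fintype.card (Fin L ⊕ Fin L) = 2 * Fintype.card (Fin L) := by
    rw [Fintype.card_sum, two_mul]
  exact stmt_18_general ⟨hcard, by simpa using hΦrank, hΦ⟩
    ⟨hcard, by simpa using hΨrank, hΨ⟩
end
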